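/- Let f₀ : ℝⁿ → ℝ be a nonconstant polynomial function that is bounded from below on ℝⁿ and nondegenerate at infinity, and set f* := inf_{x ∈ ℝⁿ} f₀(x). Then f* = min{c : c ∈ K₀(f₀) ∪ Σ∞(f₀)} = min{c : c ∈ K₀(f₀) ∪ Σ∞'(f₀)}. -/

import Mathlib

open MvPolynomial Set Filter
open scoped Classical

noncomputable section

/-- The exponent vector of a monomial, viewed as a point of `ℝⁿ`. -/
def expVec {n : ℕ} (κ : Fin n →₀ ℕ) : Fin n → ℝ := fun j => (κ j : ℝ)

/-- The Newton polyhedron at infinity `Γ(f)`: the convex hull of the support of `f`. -/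
def NewtonPolyhedron {n : ℕ} (f : MvPolynomial (Fin n) ℝ) : Set (Fin n → ℝ) :=
  convexHull ℝ (expVec '' (f.support : Set (Fin n →₀ ℕ)))

/-- `d(q, Γ(f)) := min {⟨q, κ⟩ : κ ∈ Γ(f)}`. -/
def NewtonD {n : ℕ} (f : MvPolynomial (Fin n) ℝ) (q : Fin n → ℝ) : ℝ :=
  sInf ((fun κ : Fin n → ℝ => ∑ j, q j * κ j) '' NewtonPolyhedron f)

/-- `Δ(q, Γ(f)) := {κ ∈ Γ(f) : ⟨q, κ⟩ = d(q, Γ(f))}`. -/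
def NewtonFace {n : ℕ} (f : MvPolynomial (Fin n) ℝ) (q : Fin n → ℝ) : Set (Fin n → ℝ) :=
  {κ ∈ NewtonPolyhedron f | ∑ j, q j * κ j = NewtonD f q}

/-- For a set `Δ ⊆ ℝⁿ`, the polynomial `f_Δ := ∑_{κ ∈ Δ} a_κ x^κ`. -/
def facePoly {n : ℕ} (f : MvPolynomial (Fin n) ℝ) (Δ : Set (Fin n → ℝ)) :
    MvPolynomial (Fin n) ℝ :=
  ∑ κ ∈ f.support.filter (fun κ => expVec κ ∈ Δ), monomial κ (f.coeff κ)

/-- `ℝ^J := {x ∈ ℝⁿ : x_j = 0 for all j ∉ J}`. -/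
def RJ {n : ℕ} (J : Set (Fin n)) : Set (Fin n → ℝ) := {x | ∀ j ∉ J, x j = 0}

/-- The restriction of `f` to `ℝ^J` is not constant. -/
def NotConstOn {n : ℕ} (f : MvPolynomial (Fin n) ℝ) (J : Set (Fin n)) : Prop :=
  ∃ x ∈ RJ J, ∃ y ∈ RJ J, eval x f ≠ eval y f

/-- The Mangasarian–Fromovitz property at infinity for `inf {f 0 x : f i x ≤ 0, i = 1,…,p}`. -/
def MFinfty {n p : ℕ} (f : Fin (p + 1) → MvPolynomial (Fin n) ℝ) : Prop :=
  ∀ J : Set (Fin n), J.Nonempty → ∀ q x : Fin n → ℝ,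
    NewtonD (f 0) q < 0 →
    (∀ i, NotConstOn (f i) J → NewtonFace (f i) q ⊆ RJ J) →
    (∀ j, x j = 0 ↔ j ∉ J) →
    (∀ i, i ≠ 0 → eval x (facePoly (f i) (NewtonFace (f i) q)) ≤ 0) →
    ∃ v : Fin n → ℝ, v ≠ 0 ∧ ∀ i, NotConstOn (f i) J →
      eval x (facePoly (f i) (NewtonFace (f i) q)) = 0 →
      ∑ j, eval x (pderiv j (facePoly (f i) (NewtonFace (f i) q))) * v j < 0

/-- Kouchnirenko non-degeneracy at infinity. -/
def NondegenerateAtInfinity {n : ℕ} (f : MvPolynomial (Fin n) ℝ) : Prop :=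
  ∀ q : Fin n → ℝ, NewtonD f q < 0 →
    ∀ x : Fin n → ℝ, (∀ j, x j ≠ 0) →
      ¬ ∀ j, eval x (pderiv j (facePoly f (NewtonFace f q))) = 0

/-- A convenient polynomial. -/
def Convenient {n : ℕ} (f : MvPolynomial (Fin n) ℝ) : Prop :=
  ∀ j : Fin n, ∃ c : ℝ, 0 < c ∧ c • (Pi.single j 1 : Fin n → ℝ) ∈ NewtonPolyhedron f

/-- A bad face of `Γ(f)`. -/
def BadFace {n : ℕ} (f : MvPolynomial (Fin n) ℝ) (Δ : Set (Fin n → ℝ)) : Prop :=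
  (∃ q : Fin n → ℝ, Δ = NewtonFace f q) ∧
  (0 : Fin n → ℝ) ∈ affineSpan ℝ Δ ∧
  ∃ q : Fin n → ℝ, (∃ i j, q i * q j < 0) ∧
    {κ : Fin n → ℝ | ∑ j, q j * κ j = 0} ∩ NewtonPolyhedron f = Δ

/-- The set of critical values of `f`. -/
def K0 {n : ℕ} (f : MvPolynomial (Fin n) ℝ) : Set ℝ :=
  {c | ∃ x : Fin n → ℝ, (∀ j, eval x (pderiv j f) = 0) ∧ eval x f = c}

/-- `Σ∞(f)`: critical values of `f_Δ` over all bad faces `Δ`. -/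
def SigmaInfty {n : ℕ} (f : MvPolynomial (Fin n) ℝ) : Set ℝ :=
  {c | ∃ Δ : Set (Fin n → ℝ), BadFace f Δ ∧ ∃ x : Fin n → ℝ,
    (∀ j, eval x (pderiv j (facePoly f Δ)) = 0) ∧ eval x (facePoly f Δ) = c}

/-- `Σ∞'(f)`: critical values of `f_Δ` on `(ℝ ∖ {0})ⁿ` over all bad faces `Δ`. -/
def SigmaInfty' {n : ℕ} (f : MvPolynomial (Fin n) ℝ) : Set ℝ :=
  {c | ∃ Δ : Set (Fin n → ℝ), BadFace f Δ ∧ ∃ x : Fin n → ℝ, (∀ j, x j ≠ 0) ∧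
    (∀ j, eval x (pderiv j (facePoly f Δ)) = 0) ∧ eval x (facePoly f Δ) = c}

/-- The Euclidean norm on `Fin k → ℝ`. -/
def euclNorm {k : ℕ} (x : Fin k → ℝ) : ℝ := Real.sqrt (∑ j, (x j) ^ 2)

/-- Basic semialgebraic subsets of `ℝ^m`. -/
def BasicSA {m : ℕ} (A : Set (Fin m → ℝ)) : Prop :=
  ∃ (k l : ℕ) (g : Fin k → MvPolynomial (Fin m) ℝ) (h : Fin l → MvPolynomial (Fin m) ℝ),
    A = {x | (∀ i, eval x (g i) = 0) ∧ ∀ i, 0 < eval x (h i)}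

/-- Semialgebraic subsets of `ℝ^m`: finite unions of basic semialgebraic sets. -/
def IsSA {m : ℕ} (A : Set (Fin m → ℝ)) : Prop :=
  ∃ (N : ℕ) (B : Fin N → Set (Fin m → ℝ)), (∀ i, BasicSA (B i)) ∧ A = ⋃ i, B i

/-- A semialgebraic scalar function on a domain `D ⊆ ℝ` (graph is semialgebraic). -/
def IsSAFunOn (D : Set ℝ) (f : ℝ → ℝ) : Prop :=
  IsSA {z : Fin 2 → ℝ | z 0 ∈ D ∧ z 1 = f (z 0)}

/-- A semialgebraic curve `D → ℝⁿ` (graph is semialgebraic). -/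
def IsSACurve {n : ℕ} (D : Set ℝ) (φ : ℝ → Fin n → ℝ) : Prop :=
  IsSA {z : Fin (n + 1) → ℝ | z 0 ∈ D ∧ ∀ j : Fin n, z j.succ = φ (z 0) j}

/-- A semialgebraic map `ℝⁿ → ℝ^p` (graph is semialgebraic). -/
def IsSAMap {n p : ℕ} (F : (Fin n → ℝ) → (Fin p → ℝ)) : Prop :=
  IsSA {z : Fin (n + p) → ℝ |
    (fun i : Fin p => z (Fin.natAdd n i)) = F (fun j : Fin n => z (Fin.castAdd p j))}

/-!
On a suitable open orthant, whose infimum is that of `f`, use logarithmic coordinates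
`x = s exp u`. Minimizing `f + ε ‖u‖` for `ε → 0` gives points `u k` along which `f` tends to its
infimum `m` while all `x_j ∂f/∂x_j` tend to zero. Along an ultrafilter each pairing `⟨u k, κ⟩`,
`κ ∈ supp f`, converges or tends to `±∞`, and these limits are reproduced by a ray: there are `q`
and `v` such that the largest monomials at `u k` behave as at `v - t q`, `t → ∞`.

If some `⟨u k, κ⟩` tends to `+∞`, then `d(q, Γ(f)) < 0` and dividing the `x_j ∂f/∂x_j` by the
largest monomial shows that `s exp v` is critical for `f_Δ`, `Δ = Δ(q, Γ(f))`, against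
nondegeneracy. Otherwise `⟨q, κ⟩ ≥ 0` on `supp f` and `m = f_Δ(s exp v)`, where `Δ` is cut out by
`⟨q, κ⟩ = 0`. Since `f_Δ` is a limit of `f` along `r ↦ exp(-r q) · x`, it is bounded below by `m`,
so `s exp v` is critical for it. If the coordinates of `q` all have the same sign, `m` is a value
of `f`. If not, `Δ` is bad: were `0` not in its affine span, tilting `q` would turn `Δ` into a face
of `Γ∞(f)` on which `f` degenerates.

The bound `m ≤ f_Δ` holds on every bad face, because a hyperplane that cuts out a face has `Γ(f)`
on one side.
-/

open scoped Matrix Topology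

section PalaisSmale

variable {E : Type*} [NormedAddCommGroup E] {F : E → ℝ}

lemma exists_forall_add_mul_norm_le [ProperSpace E] (hF : Continuous F)
    (hbdd : BddBelow (range F)) {ε : ℝ} (hε : 0 < ε) :
    ∃ x, ∀ z, F x + ε * ‖x‖ ≤ F z + ε * ‖z‖ := by
  obtain ⟨m, hm⟩ := hbdd
  refine (hF.add (continuous_norm.const_mul ε)).exists_forall_le ?_
  exact tendsto_atTop_add_left_of_le _ m (fun z => hm ⟨z, rfl⟩)
    (tendsto_norm_cocompact_atTop.const_mul_atTop hε)

variable [NormedSpace ℝ E]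

lemma norm_le_of_forall_sub_mul_norm_le {F' : E →L[ℝ] ℝ} {x : E} {ε : ℝ} (hF : HasFDerivAt F F' x)
    (hε : 0 ≤ ε) (h : ∀ z, F x - ε * ‖z - x‖ ≤ F z) : ‖F'‖ ≤ ε := by
  have lower (v : E) : -(ε * ‖v‖) ≤ F' v := by
    refine ge_of_tendsto (hF.hasLineDerivAt v).tendsto_slope_zero_right ?_
    filter_upwards [self_mem_nhdsWithin] with t (ht : 0 < t)
    have := h (x + t • v)
    rw [add_sub_cancel_left, norm_smul, Real.norm_of_nonneg ht.le] at this
    rw [smul_eq_mul, le_inv_mul_iff₀ ht]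
    linarith
  refine F'.opNorm_le_bound hε fun v => abs_le.2 ⟨lower v, ?_⟩
  simpa using lower (-v)

lemma exists_seq_tendsto_isGLB_and_fderiv_tendsto_zero [ProperSpace E] {m : ℝ}
    (hF : Differentiable ℝ F) (hm : IsGLB (range F) m) :
    ∃ u : ℕ → E, Tendsto (fun k => F (u k)) atTop (𝓝 m) ∧
      Tendsto (fun k => fderiv ℝ F (u k)) atTop (𝓝 0) := by
  have hε (k : ℕ) : (0 : ℝ) < 1 / (k + 1) := Nat.one_div_pos_of_nat
  have hεlim : Tendsto (fun k : ℕ => (1 : ℝ) / (k + 1)) atTop (𝓝 0) :=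
    tendsto_one_div_add_atTop_nhds_zero_nat
  choose u hu using fun k => exists_forall_add_mul_norm_le hF.continuous hm.bddBelow (hε k)
  refine ⟨u, tendsto_order.2 ⟨fun a ha => .of_forall fun k => ha.trans_le (hm.1 ⟨u k, rfl⟩),
    fun a ha => ?_⟩, squeeze_zero_norm (fun k => ?_) hεlim⟩
  · obtain ⟨_, ⟨z, rfl⟩, hz⟩ := (isGLB_lt_iff hm).1 ha
    have hlim : Tendsto (fun k : ℕ => F z + 1 / ((k : ℝ) + 1) * ‖z‖) atTop (𝓝 (F z)) := by
      simpa using (hεlim.mul_const ‖z‖).const_add (F z)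
    filter_upwards [hlim.eventually_lt_const hz] with k hk
    linarith [hu k z, mul_nonneg (hε k).le (norm_nonneg (u k))]
  · refine norm_le_of_forall_sub_mul_norm_le (hF (u k)).hasFDerivAt (hε k).le fun z => ?_
    have := mul_le_mul_of_nonneg_left (norm_sub_norm_le z (u k)) (hε k).le
    linarith [hu k z]

end PalaisSmale

lemma exists_isGLB_of_isGLB_iUnion {ι α : Type*} [Finite ι] [Nonempty ι] [LinearOrder α]
    {A : ι → Set α} {m : α} (h : IsGLB (⋃ i, A i) m) : ∃ i, IsGLB (A i) m := by
  by_contra! hno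
  have hgap (i : ι) : ∃ a ∈ lowerBounds (A i), m < a := by
    by_contra! hle
    exact hno i ⟨fun x hx => h.1 (mem_iUnion_of_mem i hx), hle⟩
  choose a ha hma using hgap
  obtain ⟨i₀, hi₀⟩ := Finite.exists_min a
  refine (hma i₀).not_ge (h.2 fun x hx => ?_)
  obtain ⟨i, hi⟩ := mem_iUnion.1 hx
  exact (hi₀ i).trans (ha i hi)

section Limits

variable {β ι E : Type*}

lemma tendsto_nhds_or_atTop_or_atBot (l : Ultrafilter β) (a : β → ℝ) :
    (∃ c, Tendsto a l (𝓝 c)) ∨ Tendsto a l atTop ∨ Tendsto a l atBot := by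
  obtain ⟨x, hx⟩ : ∃ x : EReal, Tendsto (fun k => (a k : EReal)) l (𝓝 x) :=
    ⟨_, (l.map fun k => (a k : EReal)).le_nhds_lim⟩
  induction x with
  | bot => exact .inr (.inr (EReal.tendsto_coe_nhds_bot_iff.1 hx))
  | coe c => exact .inl ⟨c, EReal.tendsto_coe.1 hx⟩
  | top => exact .inr (.inl (EReal.tendsto_coe_nhds_top_iff.1 hx))

lemma exists_mem_forall_eventually_le (l : Ultrafilter β) {T : Finset ι} (hT : T.Nonempty)
    (a : ι → β → ℝ) : ∃ i ∈ T, ∀ j ∈ T, ∀ᶠ k in l, a j k ≤ a i k := by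
  obtain ⟨i, hi, hmax⟩ := T.exists_max_image (fun i => (a i : (l : Filter β).Germ ℝ)) hT
  exact ⟨i, hi, fun j hj => Germ.coe_le.1 (hmax j hj)⟩

lemma exists_pos_forall_mul_lt (T : Finset ι) (a b : ι → ℝ) :
    ∃ ε > 0, ∀ i ∈ T, 0 < b i → ε * a i < b i := by
  have hsmall : ∀ᶠ ε : ℝ in 𝓝[>] 0, ∀ i ∈ T, 0 < b i → ε * a i < b i := by
    refine T.eventually_all.2 fun i _ => eventually_imp_distrib_left.2 fun hi => ?_
    have hlim : Tendsto (fun ε => ε * a i) (𝓝 0) (𝓝 0) :=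
      (continuous_mul_const (a i)).tendsto' _ _ (zero_mul _)
    exact nhdsWithin_le_nhds (hlim.eventually_lt_const hi)
  obtain ⟨ε, hε, hpos⟩ := (hsmall.and self_mem_nhdsWithin).exists
  exact ⟨ε, hpos, hε⟩

lemma exists_linearMap_apply_apply_apply_eq {K V W : Type*} [Field K] [AddCommGroup V] [Module K V]
    [AddCommGroup W] [Module K W] (L : V →ₗ[K] W) : ∃ g : W →ₗ[K] V, ∀ x, L (g (L x)) = L x := by
  obtain ⟨h, hh⟩ := L.rangeRestrict.exists_rightInverse_of_surjective L.range_rangeRestrict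
  obtain ⟨g, hg⟩ := h.exists_extend
  refine ⟨g, fun x => ?_⟩
  have hgx : g (L x) = h (L.rangeRestrict x) := LinearMap.congr_fun hg (L.rangeRestrict x)
  rw [hgx]
  exact congrArg Subtype.val (LinearMap.congr_fun hh (L.rangeRestrict x))

lemma exists_forall_apply_eq_zero_or_pos [Finite ι] [AddCommGroup E] [Module ℝ E]
    {l : Filter β} [l.NeBot] {e : ι → Module.Dual ℝ E} {u : β → E}
    (h : ∀ i, (∃ c, Tendsto (fun k => e i (u k)) l (𝓝 c)) ∨
      Tendsto (fun k => e i (u k)) l atBot) :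
    ∃ q v : E, ∀ i, (e i q = 0 ∧ Tendsto (fun k => e i (u k)) l (𝓝 (e i v))) ∨
      (0 < e i q ∧ Tendsto (fun k => e i (u k)) l atBot) := by
  -- With `L` the convergent part of `e` and `g` a generalized inverse of `L`, the point
  -- `g (L (u k))` has the same `L`-values as `u k`, but every `e i` converges along it. Hence
  -- `q = g (L (u k)) - u k` works for a single large `k`.
  let C := {i // ∃ c, Tendsto (fun k => e i (u k)) l (𝓝 c)}
  choose c hc using fun i : C => i.2
  let L : E →ₗ[ℝ] C → ℝ := LinearMap.pi fun i => e i
  obtain ⟨g, hg⟩ := exists_linearMap_apply_apply_apply_eq L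
  have hgL (i : ι) : Tendsto (fun k => e i (g (L (u k)))) l (𝓝 (e i (g c))) :=
    ((e i ∘ₗ g).continuous_of_finiteDimensional.tendsto c).comp (tendsto_pi_nhds.2 hc)
  have hgLC (i : C) (k : β) : e i (g (L (u k))) = e i (u k) := congrFun (hg (u k)) i
  have hneg (i : ι) : ∀ᶠ k in l, ¬ (∃ c, Tendsto (fun k => e i (u k)) l (𝓝 c)) →
      0 < e i (g (L (u k)) - u k) := by
    by_cases hi : ∃ c, Tendsto (fun k => e i (u k)) l (𝓝 c)
    · exact .of_forall fun _ hn => absurd hi hn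
    · have := (hgL i).add_atTop (tendsto_neg_atBot_atTop.comp ((h i).resolve_left hi))
      filter_upwards [this.eventually_gt_atTop 0] with k hk _
      simpa [sub_eq_add_neg] using hk
  obtain ⟨k, hk⟩ := (eventually_all.2 hneg).exists
  refine ⟨g (L (u k)) - u k, g c, fun i => ?_⟩
  by_cases hi : ∃ c, Tendsto (fun k => e i (u k)) l (𝓝 c)
  · exact .inl ⟨by rw [map_sub, hgLC ⟨i, hi⟩, sub_self],
      (hgL i).congr fun k => hgLC ⟨i, hi⟩ k⟩
  · exact .inr ⟨hk i hi, (h i).resolve_left hi⟩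

end Limits

section Affine

lemma exists_dual_eq_one_of_zero_notMem_affineSpan {K V : Type*} [Field K] [AddCommGroup V]
    [Module K V] {A : Set V} (h : (0 : V) ∉ affineSpan K A) :
    ∃ φ : Module.Dual K V, ∀ z ∈ A, φ z = 1 := by
  obtain rfl | ⟨z₀, hz₀⟩ := A.eq_empty_or_nonempty
  · exact ⟨0, by simp⟩
  have hmem {z : V} (hz : z ∈ A) := subset_affineSpan K A hz
  have hz₀dir : z₀ ∉ (affineSpan K A).direction := fun hdir => h <| by
    simpa using AffineSubspace.vadd_mem_of_mem_direction (neg_mem hdir) (hmem hz₀)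
  obtain ⟨φ, hφ, hker⟩ := Submodule.exists_le_ker_of_notMem hz₀dir
  refine ⟨(φ z₀)⁻¹ • φ, fun z hz => ?_⟩
  have hzz₀ : φ (z - z₀) = 0 := hker (AffineSubspace.vsub_mem_direction (hmem hz) (hmem hz₀))
  rw [map_sub, sub_eq_zero] at hzz₀
  rw [LinearMap.smul_apply, hzz₀, smul_eq_mul, inv_mul_cancel₀ hφ]

lemma forall_nonneg_or_forall_nonpos_of_isExtreme {E : Type*} [AddCommGroup E] [Module ℝ E]
    {A : Set E} (hA : Convex ℝ A) {φ : Module.Dual ℝ E} (h : IsExtreme ℝ A {z ∈ A | φ z = 0}) :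
    (∀ z ∈ A, 0 ≤ φ z) ∨ ∀ z ∈ A, φ z ≤ 0 := by
  by_contra! hcon
  obtain ⟨⟨x, hx, hφx⟩, y, hy, hφy⟩ := hcon
  obtain ⟨z, hz, hφz⟩ : ∃ z ∈ openSegment ℝ x y, φ z = 0 := by
    change (0 : ℝ) ∈ φ.toAffineMap '' openSegment ℝ x y
    rw [image_openSegment]
    change (0 : ℝ) ∈ openSegment ℝ (φ x) (φ y)
    rw [openSegment_eq_Ioo (hφx.trans hφy)]
    exact ⟨hφx, hφy⟩
  exact hφx.ne (h.left_mem_of_mem_openSegment hx hy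
    ⟨hA.openSegment_subset hx hy hz, hφz⟩ hz).2

end Affine

section Eval

variable {σ : Type*}

lemma coeff_X_mul_pderiv {R : Type*} [CommSemiring R] (j : σ) (f : MvPolynomial σ R)
    (κ : σ →₀ ℕ) : coeff κ (X j * pderiv j f) = κ j * coeff κ f := by
  induction f using MvPolynomial.induction_on' with
  | monomial μ a =>
    rw [X_mul_pderiv_monomial, coeff_smul, coeff_monomial, nsmul_eq_mul]
    split_ifs with h <;> simp [h]
  | add f g hf hg => rw [map_add, mul_add, coeff_add, hf, hg, coeff_add, mul_add]

lemma support_X_mul_pderiv_subset {R : Type*} [CommSemiring R] (j : σ) (f : MvPolynomial σ R) :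
    (X j * pderiv j f).support ⊆ f.support := fun κ hκ => by
  rw [mem_support_iff, coeff_X_mul_pderiv] at hκ
  exact mem_support_iff.2 (right_ne_zero_of_mul hκ)

lemma hasFDerivAt_eval [Fintype σ] {𝕜 : Type*} [NontriviallyNormedField 𝕜] (f : MvPolynomial σ 𝕜)
    (x : σ → 𝕜) :
    HasFDerivAt (fun x : σ → 𝕜 => eval x f)
      (∑ j, eval x (pderiv j f) • (ContinuousLinearMap.proj j : (σ → 𝕜) →L[𝕜] 𝕜)) x := by
  induction f using MvPolynomial.induction_on with
  | C a =>
    simp only [eval_C]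
    exact (hasFDerivAt_const a x).congr_fderiv (by ext; simp)
  | add f g hf hg =>
    simp only [map_add]
    exact (hf.add hg).congr_fderiv (by ext; simp [add_mul, Finset.sum_add_distrib])
  | mul_X f i hf =>
    simp only [eval_mul, eval_X]
    refine (hf.mul (hasFDerivAt_apply i x)).congr_fderiv (ContinuousLinearMap.ext fun v => ?_)
    simp [pderiv_X, Pi.single_apply, apply_ite, add_mul, Finset.sum_add_distrib, Finset.mul_sum,
      mul_assoc]

lemma eval_pderiv_eq_zero_of_isLocalMin [Finite σ] {f : MvPolynomial σ ℝ} {x : σ → ℝ}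
    (h : IsLocalMin (fun x : σ → ℝ => eval x f) x) (j : σ) : eval x (pderiv j f) = 0 := by
  cases nonempty_fintype σ
  simpa [Pi.single_apply] using
    DFunLike.congr_fun (h.hasFDerivAt_eq_zero (hasFDerivAt_eval f x)) (Pi.single j 1)

/-- The action `u · x = (x₁ exp u₁, …, xₙ exp uₙ)`; for a fixed `x` off the coordinate hyperplanes,
`u` is a system of logarithmic coordinates on the orthant of `x`. -/
def expScale (x u : σ → ℝ) : σ → ℝ := fun j => x j * Real.exp (u j)

@[simp]
lemma expScale_zero (x : σ → ℝ) : expScale x 0 = x := by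
  ext j
  simp [expScale]

lemma expScale_ne_zero {x : σ → ℝ} (hx : ∀ j, x j ≠ 0) (u : σ → ℝ) (j : σ) :
    expScale x u j ≠ 0 :=
  mul_ne_zero (hx j) (Real.exp_ne_zero _)

lemma hasFDerivAt_eval_expScale [Fintype σ] (f : MvPolynomial σ ℝ) (x u : σ → ℝ) :
    HasFDerivAt (fun u => eval (expScale x u) f)
      (∑ j, eval (expScale x u) (X j * pderiv j f) •
        (ContinuousLinearMap.proj j : (σ → ℝ) →L[ℝ] ℝ)) u := by
  have hscale : HasFDerivAt (expScale x)
      (ContinuousLinearMap.pi fun j =>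
        expScale x u j • (ContinuousLinearMap.proj j : (σ → ℝ) →L[ℝ] ℝ)) u := by
    refine hasFDerivAt_pi.2 fun j => ?_
    simpa [expScale, smul_smul] using ((hasFDerivAt_apply j u).exp.const_mul (x j))
  refine ((hasFDerivAt_eval f (expScale x u)).comp u hscale).congr_fderiv ?_
  ext v
  simp [mul_assoc, mul_comm]

lemma exists_isGLB_range_expScale [Finite σ] {g : (σ → ℝ) → ℝ} (hg : Continuous g) {m : ℝ}
    (hm : IsGLB (range g) m) :
    ∃ s : σ → ℝ, (∀ j, s j ≠ 0) ∧ IsGLB (range fun u => g (expScale s u)) m := by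
  let D : Set (σ → ℝ) := univ.pi fun _ => {0}ᶜ
  have hD : Dense D := dense_pi univ fun _ _ => dense_compl_singleton 0
  let A (ε : {ε : σ → SignType // ∀ j, ε j ≠ 0}) : Set ℝ :=
    range fun u => g (expScale (fun j => (ε.1 j : ℝ)) u)
  have hA : g '' D = ⋃ ε, A ε := by
    refine Subset.antisymm ?_ (iUnion_subset ?_)
    · rintro _ ⟨x, hx, rfl⟩
      have hx₀ (j : σ) : x j ≠ 0 := hx j trivial
      refine mem_iUnion.2 ⟨⟨fun j => SignType.sign (x j), fun j => sign_ne_zero.2 (hx₀ j)⟩,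
        fun j => Real.log |x j|, congrArg g (funext fun j => ?_)⟩
      simp [expScale, -Real.log_abs, Real.exp_log (abs_pos.2 (hx₀ j))]
    · rintro ε _ ⟨u, rfl⟩
      have hε (j : σ) : (ε.1 j : ℝ) ≠ 0 := (map_ne_zero SignType.castHom).2 (ε.2 j)
      exact ⟨_, fun j _ => expScale_ne_zero hε u j, rfl⟩
  rw [← isGLB_iff_of_subset_of_subset_closure (image_subset_range g D)
    (hg.range_subset_closure_image_dense hD), hA] at hm
  have : Nonempty {ε : σ → SignType // ∀ j, ε j ≠ 0} := ⟨1, by simp⟩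
  obtain ⟨ε, hε⟩ := exists_isGLB_of_isGLB_iUnion hm
  exact ⟨fun j => ε.1 j, fun j => (map_ne_zero SignType.castHom).2 (ε.2 j), hε⟩

end Eval

section FacePoly

variable {n : ℕ} {f : MvPolynomial (Fin n) ℝ} {Δ Δ' : Set (Fin n → ℝ)}

lemma coeff_facePoly (f : MvPolynomial (Fin n) ℝ) (Δ : Set (Fin n → ℝ)) (κ : Fin n →₀ ℕ) :
    coeff κ (facePoly f Δ) = if expVec κ ∈ Δ then coeff κ f else 0 := by
  simp +contextual [facePoly, coeff_sum, coeff_monomial, Finset.sum_ite_eq', ite_and]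

lemma facePoly_congr (h : ∀ κ ∈ f.support, expVec κ ∈ Δ ↔ expVec κ ∈ Δ') :
    facePoly f Δ = facePoly f Δ' := by
  rw [facePoly, facePoly, Finset.filter_congr h]

lemma facePoly_eq_self (h : ∀ κ ∈ f.support, expVec κ ∈ Δ) : facePoly f Δ = f := by
  rw [facePoly, Finset.filter_true_of_mem h, ← as_sum]

lemma eval_zero_eq_eval_facePoly {q : Fin n → ℝ} (hq : ∀ κ ∈ f.support, q ⬝ᵥ expVec κ ≠ 0)
    (x : Fin n → ℝ) : eval 0 f = eval x (facePoly f {z | q ⬝ᵥ z = 0}) := by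
  have hcoeff (κ) (hκ : q ⬝ᵥ expVec κ = 0) : coeff κ f = 0 :=
    notMem_support_iff.1 fun hmem => hq κ hmem hκ
  have hface : facePoly f {z | q ⬝ᵥ z = 0} = 0 := by
    ext κ
    simpa [coeff_facePoly] using hcoeff κ
  rw [hface, map_zero, eval_zero, constantCoeff_eq]
  exact hcoeff 0 (by simp [expVec, dotProduct])

lemma X_mul_pderiv_facePoly (j : Fin n) (f : MvPolynomial (Fin n) ℝ) (Δ : Set (Fin n → ℝ)) :
    X j * pderiv j (facePoly f Δ) = facePoly (X j * pderiv j f) Δ := by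
  ext κ
  simp only [coeff_X_mul_pderiv, coeff_facePoly, mul_ite, mul_zero]

lemma eval_expScale_monomial (x u : Fin n → ℝ) (κ : Fin n →₀ ℕ) (a : ℝ) :
    eval (expScale x u) (monomial κ a) = Real.exp (u ⬝ᵥ expVec κ) * eval x (monomial κ a) := by
  have hexp : Real.exp (u ⬝ᵥ expVec κ) = ∏ j, Real.exp (u j) ^ κ j := by
    simp only [dotProduct, expVec, Real.exp_sum, ← Real.exp_nat_mul, mul_comm]
  rw [eval_monomial, eval_monomial, Finsupp.prod_pow, Finsupp.prod_pow, hexp]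
  simp only [expScale, mul_pow, Finset.prod_mul_distrib]
  ring

lemma tendsto_exp_neg_mul_eval_expScale {β : Type*} {l : Filter β} {u : β → Fin n → ℝ}
    {a : β → ℝ} {v : Fin n → ℝ} (x : Fin n → ℝ)
    (hmem : ∀ κ ∈ f.support, expVec κ ∈ Δ →
      Tendsto (fun k => u k ⬝ᵥ expVec κ - a k) l (𝓝 (v ⬝ᵥ expVec κ)))
    (hnotMem : ∀ κ ∈ f.support, expVec κ ∉ Δ →
      Tendsto (fun k => u k ⬝ᵥ expVec κ - a k) l atBot) :
    Tendsto (fun k => Real.exp (-a k) * eval (expScale x (u k)) f) l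
      (𝓝 (eval (expScale x v) (facePoly f Δ))) := by
  have hterm (κ) (hκ : κ ∈ f.support) :
      Tendsto (fun k => Real.exp (u k ⬝ᵥ expVec κ - a k) * eval x (monomial κ (coeff κ f))) l
        (𝓝 (if expVec κ ∈ Δ then eval (expScale x v) (monomial κ (coeff κ f)) else 0)) := by
    split_ifs with hΔ
    · rw [eval_expScale_monomial]
      exact ((hmem κ hκ hΔ).rexp).mul_const _
    · simpa using (Real.tendsto_exp_atBot.comp (hnotMem κ hκ hΔ)).mul_const
        (eval x (monomial κ (coeff κ f)))
  rw [facePoly, map_sum, Finset.sum_filter]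
  refine (tendsto_finsetSum _ hterm).congr fun k => ?_
  conv_rhs => rw [f.as_sum, map_sum, Finset.mul_sum]
  refine Finset.sum_congr rfl fun κ _ => ?_
  rw [eval_expScale_monomial, ← mul_assoc, ← Real.exp_add, sub_eq_neg_add]

lemma tendsto_eval_expScale_neg_smul {q : Fin n → ℝ} (hq : ∀ κ ∈ f.support, 0 ≤ q ⬝ᵥ expVec κ)
    (x : Fin n → ℝ) :
    Tendsto (fun r : ℝ => eval (expScale x (-r • q)) f) atTop
      (𝓝 (eval x (facePoly f {z | q ⬝ᵥ z = 0}))) := by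
  have := tendsto_exp_neg_mul_eval_expScale (f := f) (Δ := {z | q ⬝ᵥ z = 0}) (l := atTop)
    (u := fun r : ℝ => -r • q) (a := 0) (v := 0) x
    (fun κ _ (h : q ⬝ᵥ expVec κ = 0) => by simp [h])
    (fun κ hκ (h : q ⬝ᵥ expVec κ ≠ 0) => by
      simpa using tendsto_id.atTop_mul_const ((hq κ hκ).lt_of_ne' h))
  simpa using this

lemma le_eval_facePoly {q : Fin n → ℝ} (hq : ∀ κ ∈ f.support, 0 ≤ q ⬝ᵥ expVec κ) {m : ℝ}
    (hm : ∀ x, m ≤ eval x f) (x : Fin n → ℝ) : m ≤ eval x (facePoly f {z | q ⬝ᵥ z = 0}) :=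
  ge_of_tendsto' (tendsto_eval_expScale_neg_smul hq x) fun _ => hm _

lemma exists_eval_eq_eval_facePoly {q : Fin n → ℝ} (hq : 0 ≤ q) (f : MvPolynomial (Fin n) ℝ)
    (x : Fin n → ℝ) : ∃ y, eval y f = eval x (facePoly f {z | q ⬝ᵥ z = 0}) := by
  have hscale : Tendsto (fun r : ℝ => expScale x (-r • q)) atTop
      (𝓝 fun j => if q j = 0 then x j else 0) := by
    refine tendsto_pi_nhds.2 fun j => ?_
    obtain hj | (hj : 0 < q j) := (hq j).eq_or_lt
    · simp [expScale, ← hj]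
    · have := Real.tendsto_exp_neg_atTop_nhds_zero.comp (tendsto_id.atTop_mul_const hj)
      simpa [expScale, hj.ne', Function.comp_def] using this.const_mul (x j)
  have hqκ (κ) (_ : κ ∈ f.support) : 0 ≤ q ⬝ᵥ expVec κ :=
    dotProduct_nonneg_of_nonneg hq fun _ => Nat.cast_nonneg _
  exact ⟨_, tendsto_nhds_unique (((continuous_eval f).tendsto _).comp hscale)
    (tendsto_eval_expScale_neg_smul hqκ x)⟩

end FacePoly

section NewtonFace

variable {n : ℕ} {f : MvPolynomial (Fin n) ℝ} {q : Fin n → ℝ} {κ₀ : Fin n →₀ ℕ}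

lemma expVec_mem_newtonPolyhedron {κ : Fin n →₀ ℕ} (hκ : κ ∈ f.support) :
    expVec κ ∈ NewtonPolyhedron f :=
  subset_convexHull ℝ _ (mem_image_of_mem _ hκ)

lemma le_dotProduct_of_mem_newtonPolyhedron {c : ℝ} (h : ∀ κ ∈ f.support, c ≤ q ⬝ᵥ expVec κ)
    {z : Fin n → ℝ} (hz : z ∈ NewtonPolyhedron f) : c ≤ q ⬝ᵥ z := by
  refine convexHull_min (𝕜 := ℝ) (t := {z | c ≤ q ⬝ᵥ z}) ?_
    (convex_halfSpace_ge (dotProductEquiv ℝ (Fin n) q).isLinear c) hz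
  rintro _ ⟨κ, hκ, rfl⟩
  exact h κ hκ

lemma newtonD_le {z : Fin n → ℝ} (hz : z ∈ NewtonPolyhedron f) : NewtonD f q ≤ q ⬝ᵥ z := by
  have hcompact : IsCompact (NewtonPolyhedron f) :=
    (f.support.finite_toSet.image _).isCompact_convexHull ℝ
  exact csInf_le (hcompact.image (by fun_prop)).bddBelow (mem_image_of_mem _ hz)

lemma newtonD_eq (hκ₀ : κ₀ ∈ f.support)
    (hmin : ∀ κ ∈ f.support, q ⬝ᵥ expVec κ₀ ≤ q ⬝ᵥ expVec κ) : NewtonD f q = q ⬝ᵥ expVec κ₀ :=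
  IsLeast.csInf_eq ⟨mem_image_of_mem _ (expVec_mem_newtonPolyhedron hκ₀),
    forall_mem_image.2 fun _ => le_dotProduct_of_mem_newtonPolyhedron hmin⟩

lemma facePoly_inter_newtonPolyhedron (f : MvPolynomial (Fin n) ℝ) (Δ : Set (Fin n → ℝ)) :
    facePoly f (Δ ∩ NewtonPolyhedron f) = facePoly f Δ :=
  facePoly_congr fun _ hκ => and_iff_left (expVec_mem_newtonPolyhedron hκ)

lemma newtonFace_eq_inter (hκ₀ : κ₀ ∈ f.support)
    (hmin : ∀ κ ∈ f.support, q ⬝ᵥ expVec κ₀ ≤ q ⬝ᵥ expVec κ) :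
    NewtonFace f q = {z | q ⬝ᵥ z = q ⬝ᵥ expVec κ₀} ∩ NewtonPolyhedron f := by
  rw [inter_comm, ← newtonD_eq hκ₀ hmin]
  rfl

lemma facePoly_newtonFace (hκ₀ : κ₀ ∈ f.support)
    (hmin : ∀ κ ∈ f.support, q ⬝ᵥ expVec κ₀ ≤ q ⬝ᵥ expVec κ) :
    facePoly f (NewtonFace f q) = facePoly f {z | q ⬝ᵥ z = q ⬝ᵥ expVec κ₀} := by
  rw [newtonFace_eq_inter hκ₀ hmin, facePoly_inter_newtonPolyhedron]

lemma isExtreme_newtonFace (f : MvPolynomial (Fin n) ℝ) (q : Fin n → ℝ) :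
    IsExtreme ℝ (NewtonPolyhedron f) (NewtonFace f q) where
  subset _ hz := hz.1
  left_mem_of_mem_openSegment x hx y hy z hz hxy := by
    obtain ⟨a, b, ha, hb, hab, rfl⟩ := hxy
    refine ⟨hx, le_antisymm ?_ (newtonD_le hx)⟩
    have hxy : a * (q ⬝ᵥ x) + b * (q ⬝ᵥ y) = NewtonD f q := by
      simpa [dotProduct_add] using (show q ⬝ᵥ (a • x + b • y) = NewtonD f q from hz.2)
    have hy' := mul_le_mul_of_nonneg_left (newtonD_le (q := q) hy) hb.le
    refine le_of_mul_le_mul_left ?_ ha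
    change a * (q ⬝ᵥ x) ≤ a * NewtonD f q
    linear_combination hxy + hy' - NewtonD f q * hab

lemma badFace_newtonFace (hq : ∀ κ ∈ f.support, 0 ≤ q ⬝ᵥ expVec κ) (hκ₀ : κ₀ ∈ f.support)
    (hqκ₀ : q ⬝ᵥ expVec κ₀ = 0) (hspan : (0 : Fin n → ℝ) ∈ affineSpan ℝ (NewtonFace f q))
    (hsign : ∃ i j, q i * q j < 0) : BadFace f (NewtonFace f q) := by
  refine ⟨⟨q, rfl⟩, hspan, q, hsign, ?_⟩
  rw [newtonFace_eq_inter hκ₀ (by simpa only [hqκ₀] using hq), hqκ₀]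
  rfl

lemma exists_facePoly_eq_of_badFace {Δ : Set (Fin n → ℝ)} (hΔ : BadFace f Δ) :
    ∃ q : Fin n → ℝ, (∀ κ ∈ f.support, 0 ≤ q ⬝ᵥ expVec κ) ∧
      facePoly f Δ = facePoly f {z | q ⬝ᵥ z = 0} := by
  obtain ⟨⟨p, rfl⟩, -, q, -, hq⟩ := hΔ
  have hface : facePoly f (NewtonFace f p) = facePoly f {z | q ⬝ᵥ z = 0} := by
    rw [← hq]
    exact facePoly_inter_newtonPolyhedron f _
  have hext : IsExtreme ℝ (NewtonPolyhedron f)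
      {z ∈ NewtonPolyhedron f | dotProductEquiv ℝ (Fin n) q z = 0} := by
    convert isExtreme_newtonFace f p using 1
    rw [← hq, inter_comm]
    rfl
  obtain hnonneg | hnonpos :=
    forall_nonneg_or_forall_nonpos_of_isExtreme (convex_convexHull ℝ _) hext
  · exact ⟨q, fun κ hκ => hnonneg _ (expVec_mem_newtonPolyhedron hκ), hface⟩
  · refine ⟨-q, fun κ hκ => ?_, by simpa using hface⟩
    simpa using hnonpos _ (expVec_mem_newtonPolyhedron hκ)

lemma exists_newtonD_neg_facePoly_eq (hq : ∀ κ ∈ f.support, 0 ≤ q ⬝ᵥ expVec κ)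
    (hκ₀ : κ₀ ∈ f.support) (hqκ₀ : q ⬝ᵥ expVec κ₀ = 0)
    (h : (0 : Fin n → ℝ) ∉ affineSpan ℝ (NewtonFace f q)) :
    ∃ q', NewtonD f q' < 0 ∧
      facePoly f (NewtonFace f q') = facePoly f (NewtonFace f q) := by
  have hmin : ∀ κ ∈ f.support, q ⬝ᵥ expVec κ₀ ≤ q ⬝ᵥ expVec κ := by simpa only [hqκ₀] using hq
  obtain ⟨φ, hφ⟩ := exists_dual_eq_one_of_zero_notMem_affineSpan h
  obtain ⟨p, rfl⟩ := (dotProductEquiv ℝ (Fin n)).surjective φ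
  have hp {κ} (hκ : κ ∈ f.support) (hqκ : q ⬝ᵥ expVec κ = 0) : p ⬝ᵥ expVec κ = 1 :=
    hφ _ <| by
      rw [newtonFace_eq_inter hκ₀ hmin, hqκ₀]
      exact ⟨hqκ, expVec_mem_newtonPolyhedron hκ⟩
  obtain ⟨ε, hε, hεκ⟩ := exists_pos_forall_mul_lt f.support (fun κ => p ⬝ᵥ expVec κ - 1)
    fun κ => q ⬝ᵥ expVec κ
  have hq' (κ : Fin n →₀ ℕ) :
      (q - ε • p) ⬝ᵥ expVec κ = q ⬝ᵥ expVec κ - ε * (p ⬝ᵥ expVec κ) := by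
    rw [sub_dotProduct, smul_dotProduct, smul_eq_mul]
  have hzero {κ} (hκ : κ ∈ f.support) (hqκ : q ⬝ᵥ expVec κ = 0) :
      (q - ε • p) ⬝ᵥ expVec κ = -ε := by rw [hq', hqκ, hp hκ hqκ, mul_one, zero_sub]
  have hpos {κ} (hκ : κ ∈ f.support) (hqκ : 0 < q ⬝ᵥ expVec κ) :
      -ε < (q - ε • p) ⬝ᵥ expVec κ := by linarith [hq' κ, hεκ κ hκ hqκ]
  have hmin' : ∀ κ ∈ f.support, (q - ε • p) ⬝ᵥ expVec κ₀ ≤ (q - ε • p) ⬝ᵥ expVec κ := by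
    intro κ hκ
    rw [hzero hκ₀ hqκ₀]
    exact (hq κ hκ).eq_or_lt.elim (fun h => (hzero hκ h.symm).ge) fun h => (hpos hκ h).le
  refine ⟨q - ε • p, ?_, ?_⟩
  · rw [newtonD_eq hκ₀ hmin', hzero hκ₀ hqκ₀]
    exact neg_lt_zero.2 hε
  · rw [facePoly_newtonFace hκ₀ hmin', facePoly_newtonFace hκ₀ hmin, hzero hκ₀ hqκ₀, hqκ₀]
    refine facePoly_congr fun κ hκ => ⟨fun h => ?_, hzero hκ⟩
    exact ((hq κ hκ).eq_or_lt.resolve_right fun hlt => (hpos hκ hlt).ne' h).symm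

lemma zero_mem_affineSpan_newtonFace (hnd : NondegenerateAtInfinity f)
    (hq : ∀ κ ∈ f.support, 0 ≤ q ⬝ᵥ expVec κ) (hκ₀ : κ₀ ∈ f.support)
    (hqκ₀ : q ⬝ᵥ expVec κ₀ = 0) {x : Fin n → ℝ} (hx : ∀ j, x j ≠ 0)
    (hcrit : ∀ j, eval x (pderiv j (facePoly f (NewtonFace f q))) = 0) :
    (0 : Fin n → ℝ) ∈ affineSpan ℝ (NewtonFace f q) := by
  by_contra h
  obtain ⟨q', hneg, hface⟩ := exists_newtonD_neg_facePoly_eq hq hκ₀ hqκ₀ h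
  exact hnd q' hneg x hx (hface ▸ hcrit)

end NewtonFace

section CriticalValues

variable {n : ℕ} {f : MvPolynomial (Fin n) ℝ}

lemma sigmaInfty'_subset_sigmaInfty (f : MvPolynomial (Fin n) ℝ) :
    SigmaInfty' f ⊆ SigmaInfty f :=
  fun _ ⟨Δ, hΔ, x, _, hx⟩ => ⟨Δ, hΔ, x, hx⟩

lemma mem_lowerBounds_k0_union_sigmaInfty {m : ℝ} (hm : ∀ x, m ≤ eval x f) :
    m ∈ lowerBounds (K0 f ∪ SigmaInfty f) := by
  rintro _ (⟨x, -, rfl⟩ | ⟨Δ, hΔ, x, -, rfl⟩)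
  · exact hm x
  · obtain ⟨q, hq, hface⟩ := exists_facePoly_eq_of_badFace hΔ
    rw [hface]
    exact le_eval_facePoly hq hm x

lemma eval_mem_k0_of_forall_le {x : Fin n → ℝ} (h : ∀ y, eval x f ≤ eval y f) :
    eval x f ∈ K0 f :=
  ⟨x, eval_pderiv_eq_zero_of_isLocalMin (.of_forall h), rfl⟩

lemma eval_facePoly_mem_k0_union_sigmaInfty' (hnd : NondegenerateAtInfinity f) {q : Fin n → ℝ}
    (hq : ∀ κ ∈ f.support, 0 ≤ q ⬝ᵥ expVec κ) {x : Fin n → ℝ} (hx : ∀ j, x j ≠ 0) {c : ℝ}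
    (hc : eval x (facePoly f {z | q ⬝ᵥ z = 0}) = c) (hmin : ∀ y, c ≤ eval y f) :
    c ∈ K0 f ∪ SigmaInfty' f := by
  have attained {y} (hy : eval y f = c) : c ∈ K0 f ∪ SigmaInfty' f := by
    rw [← hy] at hmin ⊢
    exact .inl (eval_mem_k0_of_forall_le hmin)
  by_cases hempty : ∀ κ ∈ f.support, q ⬝ᵥ expVec κ ≠ 0
  · exact attained (eval_zero_eq_eval_facePoly hempty x |>.trans hc)
  by_cases hnonneg : 0 ≤ q
  · obtain ⟨y, hy⟩ := exists_eval_eq_eval_facePoly hnonneg f x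
    exact attained (hy.trans hc)
  by_cases hnonpos : q ≤ 0
  · rw [facePoly_eq_self fun κ hκ => (hq κ hκ).antisymm' (Finset.sum_nonpos fun j _ =>
      mul_nonpos_of_nonpos_of_nonneg (hnonpos j) (Nat.cast_nonneg _))] at hc
    exact attained hc
  simp only [Pi.le_def, not_forall, not_le] at hnonneg hnonpos
  obtain ⟨⟨i, hi⟩, j, hj⟩ := hnonneg, hnonpos
  push Not at hempty
  obtain ⟨κ₀, hκ₀, hqκ₀⟩ := hempty
  have hface : facePoly f (NewtonFace f q) = facePoly f {z | q ⬝ᵥ z = 0} := by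
    rw [facePoly_newtonFace hκ₀ (by simpa only [hqκ₀] using hq), hqκ₀]
  rw [← hface] at hc
  have hmin' (y) : c ≤ eval y (facePoly f (NewtonFace f q)) :=
    hface ▸ le_eval_facePoly hq hmin y
  have hcrit := eval_pderiv_eq_zero_of_isLocalMin (.of_forall fun y => hc.trans_le (hmin' y))
  have hspan := zero_mem_affineSpan_newtonFace hnd hq hκ₀ hqκ₀ hx hcrit
  have hbad := badFace_newtonFace hq hκ₀ hqκ₀ hspan ⟨i, j, mul_neg_of_neg_of_pos hi hj⟩
  exact .inr ⟨_, hbad, x, hx, hcrit, hc⟩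

end CriticalValues

section Escape

variable {β : Type*} {n : ℕ} {f : MvPolynomial (Fin n) ℝ} {l : Ultrafilter β} {u : β → Fin n → ℝ}

lemma exists_dotProduct_expVec_neg_of_tendsto_atTop {κ₀ : Fin n →₀ ℕ}
    (htop : Tendsto (fun k => u k ⬝ᵥ expVec κ₀) l atTop)
    (hmax : ∀ κ ∈ f.support, ∀ᶠ k in l, u k ⬝ᵥ expVec κ ≤ u k ⬝ᵥ expVec κ₀) :
    ∃ q v : Fin n → ℝ, q ⬝ᵥ expVec κ₀ < 0 ∧ ∀ κ ∈ f.support,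
      (q ⬝ᵥ expVec κ = q ⬝ᵥ expVec κ₀ ∧
        Tendsto (fun k => u k ⬝ᵥ expVec κ - u k ⬝ᵥ expVec κ₀) l
          (𝓝 (v ⬝ᵥ expVec κ - v ⬝ᵥ expVec κ₀))) ∨
      (q ⬝ᵥ expVec κ₀ < q ⬝ᵥ expVec κ ∧
        Tendsto (fun k => u k ⬝ᵥ expVec κ - u k ⬝ᵥ expVec κ₀) l atBot) := by
  let E (κ : Fin n →₀ ℕ) : Module.Dual ℝ (Fin n → ℝ) := (dotProductBilin ℝ ℝ).flip (expVec κ)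
  let e : Option f.support → Module.Dual ℝ (Fin n → ℝ) :=
    fun i => i.elim (-E κ₀) fun κ => E κ - E κ₀
  have hbot : Tendsto (fun k => e none (u k)) l atBot := tendsto_neg_atTop_atBot.comp htop
  have hsome (κ : f.support) : (∃ c, Tendsto (fun k => e (some κ) (u k)) l (𝓝 c)) ∨
      Tendsto (fun k => e (some κ) (u k)) l atBot := by
    refine (tendsto_nhds_or_atTop_or_atBot l _).imp_right (Or.resolve_left · fun h => ?_)
    obtain ⟨k, hpos, hle⟩ := ((h.eventually_gt_atTop 0).and (hmax κ κ.2)).exists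
    exact hpos.not_ge (sub_nonpos.2 hle)
  obtain ⟨q, v, hqv⟩ := exists_forall_apply_eq_zero_or_pos (e := e) (l := l) (u := u) <|
    Option.forall.2 ⟨.inr hbot, hsome⟩
  have hqκ₀ : 0 < -(q ⬝ᵥ expVec κ₀) :=
    ((hqv none).resolve_left fun h => not_tendsto_nhds_of_tendsto_atBot hbot _ h.2).1
  exact ⟨q, v, neg_pos.1 hqκ₀, fun κ hκ =>
    (hqv (some ⟨κ, hκ⟩)).imp (And.imp_left sub_eq_zero.1) (And.imp_left sub_pos.1)⟩

lemma not_tendsto_dotProduct_expVec_atTop (hnd : NondegenerateAtInfinity f) {s : Fin n → ℝ}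
    (hs : ∀ j, s j ≠ 0)
    (hu : ∀ j, Tendsto (fun k => eval (expScale s (u k)) (X j * pderiv j f)) l (𝓝 0))
    {κ : Fin n →₀ ℕ} (hκ : κ ∈ f.support) :
    ¬ Tendsto (fun k => u k ⬝ᵥ expVec κ) l atTop := by
  intro htop
  obtain ⟨κ₀, hκ₀, hmax⟩ := exists_mem_forall_eventually_le l ⟨κ, hκ⟩ fun κ k => u k ⬝ᵥ expVec κ
  have htop₀ : Tendsto (fun k => u k ⬝ᵥ expVec κ₀) l atTop :=
    tendsto_atTop_mono' _ (hmax κ hκ) htop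
  obtain ⟨q, v, hqκ₀, hqv⟩ := exists_dotProduct_expVec_neg_of_tendsto_atTop htop₀ hmax
  have hmin : ∀ κ ∈ f.support, q ⬝ᵥ expVec κ₀ ≤ q ⬝ᵥ expVec κ := fun κ hκ =>
    (hqv κ hκ).elim (fun h => h.1.ge) fun h => h.1.le
  refine hnd q (newtonD_eq hκ₀ hmin ▸ hqκ₀) (expScale s v) (expScale_ne_zero hs v) fun j => ?_
  let a (k : β) : ℝ := u k ⬝ᵥ expVec κ₀ - v ⬝ᵥ expVec κ₀
  have hlim : Tendsto (fun k => Real.exp (-a k) * eval (expScale s (u k)) (X j * pderiv j f)) l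
      (𝓝 (eval (expScale s v)
        (facePoly (X j * pderiv j f) {z | q ⬝ᵥ z = q ⬝ᵥ expVec κ₀}))) := by
    refine tendsto_exp_neg_mul_eval_expScale s (fun μ hμ hΔ => ?_) fun μ hμ hΔ => ?_
    · obtain ⟨-, hlim⟩ := (hqv μ (support_X_mul_pderiv_subset j f hμ)).resolve_right
        fun h => h.1.ne' hΔ
      simpa [a, sub_add] using hlim.add_const (v ⬝ᵥ expVec κ₀)
    · obtain ⟨-, hlim⟩ := (hqv μ (support_X_mul_pderiv_subset j f hμ)).resolve_left
        fun h => hΔ h.1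
      simpa [a, sub_add] using tendsto_atBot_add_const_right _ (v ⬝ᵥ expVec κ₀) hlim
  have hzero : Tendsto (fun k => Real.exp (-a k) * eval (expScale s (u k)) (X j * pderiv j f)) l
      (𝓝 0) := by
    have ha : Tendsto a l atTop := tendsto_atTop_add_const_right _ (-(v ⬝ᵥ expVec κ₀)) htop₀
    simpa using (Real.tendsto_exp_neg_atTop_nhds_zero.comp ha).mul (hu j)
  have heval := tendsto_nhds_unique hlim hzero
  rw [← X_mul_pderiv_facePoly, ← facePoly_newtonFace hκ₀ hmin, eval_mul, eval_X] at heval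
  exact (mul_eq_zero.1 heval).resolve_left (expScale_ne_zero hs v j)

lemma mem_k0_union_sigmaInfty'_of_isGLB (hnd : NondegenerateAtInfinity f) {m : ℝ}
    (hm : IsGLB (range fun x : Fin n → ℝ => eval x f) m) : m ∈ K0 f ∪ SigmaInfty' f := by
  obtain ⟨s, hs, hsm⟩ := exists_isGLB_range_expScale (continuous_eval f) hm
  have hderiv := hasFDerivAt_eval_expScale f s
  obtain ⟨u, hu, hu'⟩ := exists_seq_tendsto_isGLB_and_fderiv_tendsto_zero
    (fun w => (hderiv w).differentiableAt) hsm
  let l : Ultrafilter ℕ := hyperfilter ℕ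
  have hl : (l : Filter ℕ) ≤ atTop := Nat.hyperfilter_le_atTop
  have hpartial (j) :
      Tendsto (fun k => eval (expScale s (u k)) (X j * pderiv j f)) l (𝓝 0) := by
    have := ((ContinuousLinearMap.apply ℝ ℝ (Pi.single j 1 : Fin n → ℝ)).continuous.tendsto 0).comp
      (hu'.mono_left hl)
    simpa [Function.comp_def, (hderiv _).fderiv, Pi.single_apply] using this
  let e (κ : f.support) : Module.Dual ℝ (Fin n → ℝ) := (dotProductBilin ℝ ℝ).flip (expVec κ)
  have hbounded (κ : f.support) : (∃ c, Tendsto (fun k => e κ (u k)) l (𝓝 c)) ∨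
      Tendsto (fun k => e κ (u k)) l atBot :=
    (tendsto_nhds_or_atTop_or_atBot l _).imp_right
      (Or.resolve_left · (not_tendsto_dotProduct_expVec_atTop hnd hs hpartial κ.2))
  obtain ⟨q, v, hqv⟩ := exists_forall_apply_eq_zero_or_pos hbounded
  have hq (κ) (hκ : κ ∈ f.support) : 0 ≤ q ⬝ᵥ expVec κ :=
    (hqv ⟨κ, hκ⟩).elim (fun h => h.1.ge) fun h => h.1.le
  have hlim : Tendsto (fun k => eval (expScale s (u k)) f) l
      (𝓝 (eval (expScale s v) (facePoly f {z | q ⬝ᵥ z = 0}))) := by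
    have := tendsto_exp_neg_mul_eval_expScale (f := f) (Δ := {z | q ⬝ᵥ z = 0})
      (l := (l : Filter ℕ)) (u := u) (a := 0) (v := v) s
      (fun κ hκ hΔ => by simpa [e] using ((hqv ⟨κ, hκ⟩).resolve_right fun h => h.1.ne' hΔ).2)
      fun κ hκ hΔ => by simpa [e] using ((hqv ⟨κ, hκ⟩).resolve_left fun h => hΔ h.1).2
    simpa using this
  obtain rfl := tendsto_nhds_unique (hu.mono_left hl) hlim
  exact eval_facePoly_mem_k0_union_sigmaInfty' hnd hq (expScale_ne_zero hs v) rfl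
    fun y => hm.1 ⟨y, rfl⟩

end Escape

/-- **Theorem 4.2.** The optimal value is the smallest element of `K₀(f₀) ∪ Σ∞(f₀)` and of
`K₀(f₀) ∪ Σ∞'(f₀)`. -/
theorem optimal_value_eq_min_critical {n : ℕ} (f₀ : MvPolynomial (Fin n) ℝ)
    (hnc : ∃ x y : Fin n → ℝ, eval x f₀ ≠ eval y f₀)
    (hbdd : BddBelow (Set.range fun x : Fin n → ℝ => eval x f₀))
    (hnd : NondegenerateAtInfinity f₀)
    (fstar : ℝ) (hfstar : fstar = sInf (Set.range fun x : Fin n → ℝ => eval x f₀)) :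
    IsLeast (K0 f₀ ∪ SigmaInfty f₀) fstar ∧ IsLeast (K0 f₀ ∪ SigmaInfty' f₀) fstar := by
  have hglb : IsGLB (range fun x : Fin n → ℝ => eval x f₀) fstar :=
    hfstar ▸ isGLB_csInf (range_nonempty _) hbdd
  have hsub : K0 f₀ ∪ SigmaInfty' f₀ ⊆ K0 f₀ ∪ SigmaInfty f₀ :=
    union_subset_union_right _ (sigmaInfty'_subset_sigmaInfty f₀)
  have hmem : fstar ∈ K0 f₀ ∪ SigmaInfty' f₀ := mem_k0_union_sigmaInfty'_of_isGLB hnd hglb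
  have hlower : fstar ∈ lowerBounds (K0 f₀ ∪ SigmaInfty f₀) :=
    mem_lowerBounds_k0_union_sigmaInfty fun x => hglb.1 ⟨x, rfl⟩
  exact ⟨⟨hsub hmem, hlower⟩, hmem, lowerBounds_mono_set hsub hlower⟩
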